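/- Let p ≥ 2, B > 0, 0 < λ₋ ≤ λ₊ and set τ = (λ₋ + λ₊)/2. For x ∈ ℝ^{p−1}, define Σ_x ∈ ℝ^{p×p} as the block matrix with top-left block τ I_{p−1}, top-right block 2x/B, bottom-left block 2xᵀ/B, and bottom-right entry τ, and define β_x = (−x/τ, B/2)ᵀ ∈ ℝ^p. Then: (i) for every a ∈ ℝ^{p−1} with aᵀx = 0, the vector (a, 0)ᵀ satisfies Σ_x (a,0)ᵀ = τ (a,0)ᵀ, and if x ≠ 0 then the vectors v_± = (±xᵀ/‖x‖₂, 1)ᵀ satisfy Σ_x v_± = (τ ± 2‖x‖₂/B) v_±; (ii) if ‖x‖₂ ≤ B(λ₊ − λ₋)/4, then λ₋ I_p ⪯ Σ_x ⪯ λ₊ I_p and ‖β_x‖₂ ≤ B. -/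

import Mathlib

open Matrix BigOperators

/-- Euclidean norm of a vector. -/
noncomputable def eNorm {n : Type*} [Fintype n] (v : n → ℝ) : ℝ :=
  Real.sqrt (∑ i, (v i) ^ 2)

/-- The covariance matrix `Σ_x` (of size `(q+1) × (q+1)`, indexed by `Fin q ⊕ Unit`)
with top-left block `τ I`, off-diagonal blocks `2x/B` and bottom-right entry `τ`. -/
noncomputable def SigmaX (q : ℕ) (τ B : ℝ) (x : Fin q → ℝ) :
    Matrix (Fin q ⊕ Unit) (Fin q ⊕ Unit) ℝ :=
  Matrix.fromBlocks (τ • (1 : Matrix (Fin q) (Fin q) ℝ))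
    (Matrix.of fun i _ => 2 * x i / B)
    (Matrix.of fun _ j => 2 * x j / B)
    (Matrix.of fun _ _ => τ)

/-- The regression vector `β_x = (−x/τ, B/2)ᵀ`. -/
noncomputable def betaX (q : ℕ) (τ B : ℝ) (x : Fin q → ℝ) : Fin q ⊕ Unit → ℝ :=
  Sum.elim (fun i => -x i / τ) (fun _ => B / 2)

/-- Loewner order `A ⪯ B` on symmetric matrices. -/
def Loewner {n : Type*} [Fintype n] (A B : Matrix n n ℝ) : Prop :=
  ∀ x : n → ℝ, x ⬝ᵥ A.mulVec x ≤ x ⬝ᵥ B.mulVec x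

/-!
Everything follows from the block action `Σ_x (u, t) = (τ u + (2t/B) x, (2/B)⟨x, u⟩ + τ t)`
(`SigmaX_mulVec`). The eigenvector identities are read off from it, using `⟨x, x⟩ = ‖x‖²`.
It also shows that the quadratic form of `Σ_x` at `w = (u, t)` is `τ ‖w‖²` plus the cross term
`4 t ⟨x, u⟩ / B`. By Cauchy–Schwarz and AM–GM the cross term is at most `(2 ‖x‖ / B) ‖w‖²` in
absolute value, and `2 ‖x‖ / B ≤ (λ₊ - λ₋) / 2` is exactly the distance from `τ` to `λ₋` and `λ₊`.
Finally `‖x‖ / τ ≤ B / 2`, since `λ₊ - λ₋ ≤ λ₊ + λ₋`, so `‖β_x‖² ≤ B² / 4 + B² / 4`.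
-/

lemma SigmaX_mulVec (q : ℕ) (τ B : ℝ) (x u : Fin q → ℝ) (t : ℝ) :
    (SigmaX q τ B x).mulVec (Sum.elim u (fun _ => t))
      = Sum.elim (fun i => τ * u i + 2 * t / B * x i)
          (fun _ => 2 / B * (∑ i, u i * x i) + τ * t) := by
  rw [SigmaX, Matrix.fromBlocks_mulVec]
  ext (i | i)
  · simp [Matrix.smul_mulVec, Matrix.mulVec, dotProduct]
    ring
  · simp only [Sum.elim_inr, Pi.add_apply, Matrix.mulVec, dotProduct, Matrix.of_apply,
      Sum.elim_comp_inl, Sum.elim_comp_inr, Finset.univ_unique, Finset.sum_const,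
      Finset.card_singleton, one_smul, Finset.mul_sum]
    congr 1
    exact Finset.sum_congr rfl fun j _ => by ring

lemma SigmaX_quadForm (q : ℕ) (τ B : ℝ) (x u : Fin q → ℝ) (t : ℝ) :
    (Sum.elim u (fun _ => t) : Fin q ⊕ Unit → ℝ) ⬝ᵥ
        (SigmaX q τ B x).mulVec (Sum.elim u (fun _ => t))
      = τ * (∑ i, u i ^ 2 + t ^ 2) + 4 * t / B * ∑ i, u i * x i := by
  rw [SigmaX_mulVec]
  have h : ∑ i, u i * (τ * u i + 2 * t / B * x i)
      = τ * ∑ i, u i ^ 2 + 2 * t / B * ∑ i, u i * x i := by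
    rw [Finset.mul_sum, Finset.mul_sum, ← Finset.sum_add_distrib]
    exact Finset.sum_congr rfl fun j _ => by ring
  simp only [dotProduct, Fintype.sum_sum_type, Sum.elim_inl, Sum.elim_inr, h,
    Finset.univ_unique, Finset.sum_const, Finset.card_singleton, one_smul]
  ring

lemma smul_one_quadForm (q : ℕ) (c : ℝ) (u : Fin q → ℝ) (t : ℝ) :
    (Sum.elim u (fun _ => t) : Fin q ⊕ Unit → ℝ) ⬝ᵥ
        (c • (1 : Matrix (Fin q ⊕ Unit) (Fin q ⊕ Unit) ℝ)).mulVec (Sum.elim u (fun _ => t))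
      = c * (∑ i, u i ^ 2 + t ^ 2) := by
  rw [Matrix.smul_mulVec, Matrix.one_mulVec, dotProduct_smul]
  simp [dotProduct, Fintype.sum_sum_type, pow_two]

lemma eNorm_sq {n : Type*} [Fintype n] (v : n → ℝ) : eNorm v ^ 2 = ∑ i, v i ^ 2 :=
  Real.sq_sqrt (Finset.sum_nonneg fun _ _ => sq_nonneg _)

lemma eNorm_nonneg {n : Type*} [Fintype n] (v : n → ℝ) : 0 ≤ eNorm v := Real.sqrt_nonneg _

lemma eNorm_ne_zero {n : Type*} [Fintype n] {v : n → ℝ} (hv : v ≠ 0) : eNorm v ≠ 0 := by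
  intro h
  apply hv
  have h2 := eNorm_sq v
  rw [h, zero_pow two_ne_zero, eq_comm,
    Finset.sum_eq_zero_iff_of_nonneg fun _ _ => sq_nonneg _] at h2
  ext i
  simpa using h2 i (Finset.mem_univ i)

/-- Cauchy–Schwarz followed by AM–GM, both applied to the squared inequality. -/
lemma abs_cross_le (q : ℕ) {B c : ℝ} (hB : 0 < B) (hc : 0 ≤ c) (x u : Fin q → ℝ) (t : ℝ)
    (hx : eNorm x ≤ B * c / 2) :
    |4 * t / B * ∑ i, u i * x i| ≤ c * (∑ i, u i ^ 2 + t ^ 2) := by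
  have hS : 0 ≤ ∑ i, u i ^ 2 := Finset.sum_nonneg fun _ _ => sq_nonneg _
  have hcs : (∑ i, u i * x i) ^ 2 ≤ (∑ i, u i ^ 2) * (B * c / 2) ^ 2 := by
    refine (Finset.sum_mul_sq_le_sq_mul_sq Finset.univ u x).trans ?_
    rw [← eNorm_sq x]
    have := eNorm_nonneg x
    gcongr
  apply abs_le_of_sq_le_sq _ (by positivity)
  set S := ∑ i, u i ^ 2
  calc (4 * t / B * ∑ i, u i * x i) ^ 2
      = (4 * t / B) ^ 2 * (∑ i, u i * x i) ^ 2 := by ring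
    _ ≤ (4 * t / B) ^ 2 * (S * (B * c / 2) ^ 2) := by gcongr
    _ = c ^ 2 * (4 * S * t ^ 2) := by field_simp; ring
    _ ≤ c ^ 2 * (S + t ^ 2) ^ 2 := by
        gcongr
        nlinarith [sq_nonneg (S - t ^ 2)]
    _ = (c * (S + t ^ 2)) ^ 2 := by ring

/-- The eigenvectors `v_±`, with the sign as a parameter `s`, `s² = 1`. -/
lemma SigmaX_eigen (q : ℕ) (τ B s : ℝ) (hs : s * s = 1) (x : Fin q → ℝ) (hx : x ≠ 0) :
    (SigmaX q τ B x).mulVec (Sum.elim (fun i => s * x i / eNorm x) (fun _ => 1))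
      = (τ + s * (2 * eNorm x / B)) • Sum.elim (fun i => s * x i / eNorm x) (fun _ => 1) := by
  have hN := eNorm_ne_zero hx
  have hsum : ∑ i, s * x i / eNorm x * x i = s * eNorm x := by
    have : ∑ i, s * x i / eNorm x * x i = s / eNorm x * ∑ i, x i ^ 2 := by
      rw [Finset.mul_sum]
      exact Finset.sum_congr rfl fun j _ => by ring
    rw [this, ← eNorm_sq]
    field_simp
  rw [SigmaX_mulVec, hsum]
  ext (i | i)
  · simp only [Sum.elim_inl, Pi.smul_apply, smul_eq_mul]
    have : s * (2 * eNorm x / B) * (s * x i / eNorm x)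
        = (s * s) * (2 / B * x i) * (eNorm x / eNorm x) := by ring
    rw [add_mul, this, hs, div_self hN]
    ring
  · simp only [Sum.elim_inr, Pi.smul_apply, smul_eq_mul]
    ring

theorem stmt16 (q : ℕ) (hq : 1 ≤ q) (B lamm lamp : ℝ)
    (hB : 0 < B) (hlamm : 0 < lamm) (hlam : lamm ≤ lamp) (x : Fin q → ℝ) :
    let τ : ℝ := (lamm + lamp) / 2
    -- (i) eigenvectors and eigenvalues of `Σ_x`
    ((∀ a : Fin q → ℝ, (∑ i, a i * x i) = 0 →
        (SigmaX q τ B x).mulVec (Sum.elim a (fun _ => 0))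
          = τ • Sum.elim a (fun _ => 0)) ∧
     (x ≠ 0 →
        (SigmaX q τ B x).mulVec (Sum.elim (fun i => x i / eNorm x) (fun _ => 1))
          = (τ + 2 * eNorm x / B) • Sum.elim (fun i => x i / eNorm x) (fun _ => 1) ∧
        (SigmaX q τ B x).mulVec (Sum.elim (fun i => -x i / eNorm x) (fun _ => 1))
          = (τ - 2 * eNorm x / B) • Sum.elim (fun i => -x i / eNorm x) (fun _ => 1))) ∧
    -- (ii) eigenvalue bounds and norm bound on `β_x`
    (eNorm x ≤ B * (lamp - lamm) / 4 →
      Loewner (lamm • (1 : Matrix (Fin q ⊕ Unit) (Fin q ⊕ Unit) ℝ)) (SigmaX q τ B x) ∧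
      Loewner (SigmaX q τ B x) (lamp • (1 : Matrix (Fin q ⊕ Unit) (Fin q ⊕ Unit) ℝ)) ∧
      eNorm (betaX q τ B x) ≤ B) := by
  intro τ
  refine ⟨⟨fun a ha => ?_, fun hx => ⟨?_, ?_⟩⟩, fun hx => ?_⟩
  · rw [SigmaX_mulVec, ha]
    ext (i | i) <;> simp
  · simpa using SigmaX_eigen q τ B 1 (by norm_num) x hx
  · simpa [sub_eq_add_neg] using SigmaX_eigen q τ B (-1) (by norm_num) x hx
  · have hc : 0 ≤ (lamp - lamm) / 2 := by linarith
    have hx' : eNorm x ≤ B * ((lamp - lamm) / 2) / 2 := by linarith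
    have hw : ∀ w : Fin q ⊕ Unit → ℝ,
        w = Sum.elim (fun i => w (Sum.inl i)) (fun _ => w (Sum.inr ())) := by
      intro w
      ext (i | i) <;> rfl
    refine ⟨fun w => ?_, fun w => ?_, ?_⟩
    · rw [hw w, SigmaX_quadForm, smul_one_quadForm]
      have := (abs_le.1 (abs_cross_le q hB hc x (fun i => w (Sum.inl i)) (w (Sum.inr ())) hx')).1
      simp only [τ]
      linarith
    · rw [hw w, SigmaX_quadForm, smul_one_quadForm]
      have := (abs_le.1 (abs_cross_le q hB hc x (fun i => w (Sum.inl i)) (w (Sum.inr ())) hx')).2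
      simp only [τ]
      linarith
    · have hτ : 0 < τ := by simp only [τ]; linarith
      have hle : eNorm x / τ ≤ B / 2 := by
        rw [div_le_iff₀ hτ]
        simp only [τ]
        nlinarith
      have h0 : 0 ≤ eNorm x / τ := div_nonneg (eNorm_nonneg x) hτ.le
      have hb : eNorm (betaX q τ B x) ^ 2 = (eNorm x / τ) ^ 2 + (B / 2) ^ 2 := by
        rw [eNorm_sq, div_pow, eNorm_sq, Finset.sum_div]
        simp [betaX, Fintype.sum_sum_type, div_pow]
      refine le_of_sq_le_sq ?_ hB.le
      rw [hb]
      nlinarith
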